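/- Under the assumption that there exists a constant C_σ > 0 such that ε₁ p² h_j⁻¹ / σ_j ≤ C_σ for j = 1,…,N, the norms |||·|||_p and |||·||| are equivalent on V_p^ω: there exist constants C_lb, C_ub > 0, independent of the mesh ω, of the polynomial degree p, and of ε₁, ε₂, such that C_lb |||v||| ≤ |||v|||_p ≤ C_ub |||v||| for all v = (v₀, v_b) ∈ V_p^ω. -/

import Mathlib

noncomputable section

open MeasureTheory Set

/-- A mesh `0 = x₀ < x₁ < ⋯ < x_N = 1` on the interval `I = (0,1)`. -/
structure Mesh (N : ℕ) where
  pt : Fin (N + 1) → ℝ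
  mono : StrictMono pt
  left : pt 0 = 0
  right : pt (Fin.last N) = 1

namespace Mesh

variable {N : ℕ}

/-- The left endpoint `x_{j-1}` of the `j`-th cell `I_j`. -/
def xl (m : Mesh N) (j : Fin N) : ℝ := m.pt j.castSucc

/-- The right endpoint `x_j` of the `j`-th cell `I_j`. -/
def xr (m : Mesh N) (j : Fin N) : ℝ := m.pt j.succ

/-- The width `h_j` of the `j`-th cell. -/
def width (m : Mesh N) (j : Fin N) : ℝ := m.xr j - m.xl j

end Mesh

/-- `f` coincides (everywhere) with a polynomial of degree at most `p`. -/
def IsPolyDeg (f : ℝ → ℝ) (p : ℕ) : Prop :=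
  ∃ q : Polynomial ℝ, q.natDegree ≤ p ∧ ∀ t, f t = q.eval t

/-- `D` is the weak derivative of degree `p` of the weak function with interior part `v0`
and boundary values `vl`, `vr` on the cell `(a,b)`. -/
def IsWeakDerivOn (a b : ℝ) (p : ℕ) (v0 : ℝ → ℝ) (vl vr : ℝ) (D : ℝ → ℝ) : Prop :=
  IsPolyDeg D p ∧ ∀ q : Polynomial ℝ, q.natDegree ≤ p →
    (∫ t in a..b, D t * q.eval t) =
      -(∫ t in a..b, v0 t * q.derivative.eval t) + vr * q.eval b - vl * q.eval a

/-- `D` is the (cellwise) weak derivative `D_p v` of the weak function `v = (v0, vb)`. -/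
def IsWeakDeriv {N : ℕ} (m : Mesh N) (p : ℕ) (v0 : Fin N → ℝ → ℝ)
    (vb : Fin (N + 1) → ℝ) (D : Fin N → ℝ → ℝ) : Prop :=
  ∀ j, IsWeakDerivOn (m.xl j) (m.xr j) p (v0 j) (vb j.castSucc) (vb j.succ) (D j)

/-- `D` is the weak convection derivative of degree `p` on the cell `(a,b)`,
with convection coefficient `bb`. -/
def IsWeakConvDerivOn (bb : ℝ → ℝ) (a b : ℝ) (p : ℕ) (v0 : ℝ → ℝ) (vl vr : ℝ)
    (D : ℝ → ℝ) : Prop :=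
  IsPolyDeg D p ∧ ∀ q : Polynomial ℝ, q.natDegree ≤ p →
    (∫ t in a..b, D t * q.eval t) =
      -(∫ t in a..b, v0 t * deriv (fun s => bb s * q.eval s) t)
      + vr * (bb b * q.eval b) - vl * (bb a * q.eval a)

/-- `D` is the (cellwise) weak convection derivative `D_p^c v` of `v = (v0, vb)`. -/
def IsWeakConvDeriv {N : ℕ} (m : Mesh N) (bb : ℝ → ℝ) (p : ℕ) (v0 : Fin N → ℝ → ℝ)
    (vb : Fin (N + 1) → ℝ) (D : Fin N → ℝ → ℝ) : Prop :=
  ∀ j, IsWeakConvDerivOn bb (m.xl j) (m.xr j) p (v0 j) (vb j.castSucc) (vb j.succ) (D j)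

/-- The stabilisation bilinear form `S(u,v)`. -/
def Sform {N : ℕ} (m : Mesh N) (σ : Fin N → ℝ)
    (u0 : Fin N → ℝ → ℝ) (ub : Fin (N + 1) → ℝ)
    (v0 : Fin N → ℝ → ℝ) (vb : Fin (N + 1) → ℝ) : ℝ :=
  ∑ j : Fin N, σ j * ((u0 j (m.xr j) - ub j.succ) * (v0 j (m.xr j) - vb j.succ)
    + (u0 j (m.xl j) - ub j.castSucc) * (v0 j (m.xl j) - vb j.castSucc))

/-- The convection stabilisation bilinear form `S_c(u,v)`. -/
def Scform {N : ℕ} (m : Mesh N) (ε₂ : ℝ) (bb : ℝ → ℝ)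
    (u0 : Fin N → ℝ → ℝ) (ub : Fin (N + 1) → ℝ)
    (v0 : Fin N → ℝ → ℝ) (vb : Fin (N + 1) → ℝ) : ℝ :=
  ∑ j : Fin N, ε₂ * bb (m.xr j) * (u0 j (m.xr j) - ub j.succ) * (v0 j (m.xr j) - vb j.succ)

/-- The squared jump seminorm `|v|_J²`. -/
def Jsemi2 {N : ℕ} (m : Mesh N) (ε₂ : ℝ) (bb : ℝ → ℝ)
    (v0 : Fin N → ℝ → ℝ) (vb : Fin (N + 1) → ℝ) : ℝ :=
  ∑ j : Fin N, (if j.succ = Fin.last N then (1 : ℝ) / 2 else 1) * ε₂ * bb (m.xr j) *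
    (v0 j (m.xr j) - vb j.succ) ^ 2

/-- The squared WG energy norm `|||v|||_p²`, where `Dv` is the weak derivative `D_{p-1} v`. -/
def normP2 {N : ℕ} (m : Mesh N) (ε₁ ε₂ : ℝ) (bb : ℝ → ℝ) (σ : Fin N → ℝ)
    (v0 : Fin N → ℝ → ℝ) (vb : Fin (N + 1) → ℝ) (Dv : Fin N → ℝ → ℝ) : ℝ :=
  ε₁ * (∑ j : Fin N, ∫ t in (m.xl j)..(m.xr j), (Dv j t) ^ 2)
    + (∑ j : Fin N, ∫ t in (m.xl j)..(m.xr j), (v0 j t) ^ 2)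
    + Sform m σ v0 vb v0 vb + Scform m ε₂ bb v0 vb v0 vb + Jsemi2 m ε₂ bb v0 vb

/-- The squared WG norm `|||v|||²` (with the broken classical derivative). -/
def normT2 {N : ℕ} (m : Mesh N) (ε₁ ε₂ : ℝ) (bb : ℝ → ℝ) (σ : Fin N → ℝ)
    (v0 : Fin N → ℝ → ℝ) (vb : Fin (N + 1) → ℝ) : ℝ :=
  ε₁ * (∑ j : Fin N, ∫ t in (m.xl j)..(m.xr j), (deriv (v0 j) t) ^ 2)
    + (∑ j : Fin N, ∫ t in (m.xl j)..(m.xr j), (v0 j t) ^ 2)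
    + Sform m σ v0 vb v0 vb + Scform m ε₂ bb v0 vb v0 vb + Jsemi2 m ε₂ bb v0 vb

/-- The WG bilinear form `A_p(u,v)`; `Du = D_{p-1}u`, `Dcu = D_p^c u`, `Dv = D_{p-1}v`. -/
def Aform {N : ℕ} (m : Mesh N) (ε₁ ε₂ : ℝ) (bb rr : ℝ → ℝ) (σ : Fin N → ℝ)
    (u0 : Fin N → ℝ → ℝ) (ub : Fin (N + 1) → ℝ) (Du Dcu : Fin N → ℝ → ℝ)
    (v0 : Fin N → ℝ → ℝ) (vb : Fin (N + 1) → ℝ) (Dv : Fin N → ℝ → ℝ) : ℝ :=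
  ε₁ * (∑ j : Fin N, ∫ t in (m.xl j)..(m.xr j), Du j t * Dv j t)
    + ε₂ * (∑ j : Fin N, ∫ t in (m.xl j)..(m.xr j), Dcu j t * v0 j t)
    + (∑ j : Fin N, ∫ t in (m.xl j)..(m.xr j), rr t * u0 j t * v0 j t)
    + Sform m σ u0 ub v0 vb + Scform m ε₂ bb u0 ub v0 vb

/-- `u` solves the two-parameter singularly perturbed boundary-value problem
`-ε₁ u'' + ε₂ b u' + r u = f` on `(0,1)`, `u(0) = u(1) = 0`. -/
def SolvesBVP (ε₁ ε₂ : ℝ) (bb rr ff u : ℝ → ℝ) : Prop :=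
  u 0 = 0 ∧ u 1 = 0 ∧
    ∀ x ∈ Set.Icc (0 : ℝ) 1,
      -ε₁ * deriv (deriv u) x + ε₂ * bb x * deriv u x + rr x * u x = ff x

/-- `P` is the interpolant `I y` of `y` on the cell `(a,b)`. -/
def IsInterpOn (a b : ℝ) (p : ℕ) (y P : ℝ → ℝ) : Prop :=
  IsPolyDeg P p ∧ P a = y a ∧ P b = y b ∧
    ∀ q : Polynomial ℝ, q.natDegree ≤ p →
      (∫ t in a..b, (deriv P t - deriv y t) * q.derivative.eval t) = 0

/-- `P` is the (cellwise) interpolant `I y` of `y` on the mesh `m`. -/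
def IsInterp {N : ℕ} (m : Mesh N) (p : ℕ) (y : ℝ → ℝ) (P : Fin N → ℝ → ℝ) : Prop :=
  ∀ j, IsInterpOn (m.xl j) (m.xr j) p y (P j)

/-- Glue cellwise functions into a single function on `I` (cells taken left-closed). -/
def glue {N : ℕ} (m : Mesh N) (v0 : Fin N → ℝ → ℝ) : ℝ → ℝ :=
  fun t => ∑ j : Fin N, Set.indicator (Set.Ico (m.xl j) (m.xr j)) (v0 j) t

/-- The standard penalty parameters `σ_j = ε₁ p² / h_j`. -/
def stdPen {N : ℕ} (m : Mesh N) (ε₁ : ℝ) (p : ℕ) : Fin N → ℝ :=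
  fun j => ε₁ * (p : ℝ) ^ 2 / m.width j

/-- Membership of the interior part in the broken Sobolev space `H¹(ω)`. -/
def MemM {N : ℕ} (m : Mesh N) (v0 : Fin N → ℝ → ℝ) : Prop :=
  ∀ j, DifferentiableOn ℝ (v0 j) (Set.Icc (m.xl j) (m.xr j))

/-- `(up0, upb)`, with weak derivatives `Du = D_{p-1} u_p` and `Dcu = D_p^c u_p`, is a
weak Galerkin solution of degree `p` on the mesh `m`. -/
def IsWGsol {N : ℕ} (m : Mesh N) (ε₁ ε₂ : ℝ) (bb rr ff : ℝ → ℝ) (p : ℕ)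
    (up0 : Fin N → ℝ → ℝ) (upb : Fin (N + 1) → ℝ) (Du Dcu : Fin N → ℝ → ℝ) : Prop :=
  (∀ j, IsPolyDeg (up0 j) p) ∧ upb 0 = 0 ∧ upb (Fin.last N) = 0 ∧
    IsWeakDeriv m (p - 1) up0 upb Du ∧ IsWeakConvDeriv m bb p up0 upb Dcu ∧
    ∀ (w0 : Fin N → ℝ → ℝ) (wb : Fin (N + 1) → ℝ),
      (∀ j, IsPolyDeg (w0 j) p) → wb 0 = 0 → wb (Fin.last N) = 0 →
      ∀ Dw : Fin N → ℝ → ℝ, IsWeakDeriv m (p - 1) w0 wb Dw →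
        Aform m ε₁ ε₂ bb rr (stdPen m ε₁ p) up0 upb Du Dcu w0 wb Dw
          = ∑ j : Fin N, ∫ t in (m.xl j)..(m.xr j), ff t * w0 j t

/-- Broken `L²` norm over the mesh of a cellwise-given function. -/
def brokenL2 {N : ℕ} (m : Mesh N) (f : Fin N → ℝ → ℝ) : ℝ :=
  Real.sqrt (∑ j : Fin N, ∫ t in (m.xl j)..(m.xr j), (f j t) ^ 2)

/-- `L²(a,b)` norm. -/
def intL2 (a b : ℝ) (f : ℝ → ℝ) : ℝ := Real.sqrt (∫ t in a..b, (f t) ^ 2)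

/-- Analyticity of the data: `‖g⁽ⁿ⁾‖_{∞,[0,1]} ≲ n! γ_g^n`. -/
def AnalyticData (g : ℝ → ℝ) : Prop :=
  ContDiff ℝ (⊤ : ℕ∞) g ∧ ∃ C γg : ℝ, 0 < C ∧ 0 < γg ∧
    ∀ n : ℕ, ∀ x ∈ Set.Icc (0 : ℝ) 1, |iteratedDeriv n g x| ≤ C * n.factorial * γg ^ n

/-- The characteristic values `μ₀` (`sgn = -1`) and `μ₁` (`sgn = 1`). -/
def muVal (sgn ε₁ ε₂ : ℝ) (bb rr : ℝ → ℝ) : ℝ :=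
  sInf ((fun x => (sgn * ε₂ * bb x + Real.sqrt (ε₂ ^ 2 * (bb x) ^ 2 + 4 * ε₁ * rr x))
      / (2 * ε₁)) '' Set.Icc 0 1)

def mu0 (ε₁ ε₂ : ℝ) (bb rr : ℝ → ℝ) : ℝ := muVal (-1) ε₁ ε₂ bb rr

def mu1 (ε₁ ε₂ : ℝ) (bb rr : ℝ → ℝ) : ℝ := muVal 1 ε₁ ε₂ bb rr

/-- The Spectral Boundary Layer mesh in the reaction-convection-diffusion regime. -/
def IsSBLmeshRCD {N : ℕ} (κ : ℝ) (p : ℕ) (ε₁ ε₂ : ℝ) (bb rr : ℝ → ℝ) (m : Mesh N) : Prop :=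
  ((1 : ℝ) / 2 ≤ κ * p * ε₁ ∧ N = 1) ∨
    (κ * p * ε₂ < 1 / 2 ∧ N = 3 ∧
      m.pt 1 = κ * p / mu0 ε₁ ε₂ bb rr ∧ m.pt 2 = 1 - κ * p / mu1 ε₁ ε₂ bb rr)

/-- The Spectral Boundary Layer mesh in the reaction-diffusion regime. -/
def IsSBLmeshRD {N : ℕ} (κ : ℝ) (p : ℕ) (ε₁ : ℝ) (m : Mesh N) : Prop :=
  ((1 : ℝ) / 2 ≤ κ * p * ε₁ ∧ N = 1) ∨
    (κ * p * ε₁ < 1 / 2 ∧ N = 3 ∧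
      m.pt 1 = κ * p * Real.sqrt ε₁ ∧ m.pt 2 = 1 - κ * p * Real.sqrt ε₁)

/-- The Spectral Boundary Layer mesh in the convection-diffusion regime. -/
def IsSBLmeshCD {N : ℕ} (κ : ℝ) (p : ℕ) (ε₁ : ℝ) (m : Mesh N) : Prop :=
  ((1 : ℝ) / 2 ≤ κ * p * ε₁ ∧ N = 1) ∨
    (κ * p * ε₁ ≤ 1 / 2 ∧ N = 2 ∧ m.pt 1 = 1 - κ * p * ε₁)

open Polynomial in
/-- Integration by parts for polynomials. -/
lemma integral_derivative_mul_eval (a b : ℝ) (f q : ℝ[X]) :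
    ∫ t in a..b, (derivative f).eval t * q.eval t =
      f.eval b * q.eval b - f.eval a * q.eval a
        - ∫ t in a..b, f.eval t * (derivative q).eval t := by
  rw [intervalIntegral.integral_mul_deriv_eq_deriv_mul
    (fun t _ => f.hasDerivAt t) (fun t _ => q.hasDerivAt t)
    ((derivative f).continuous.intervalIntegrable _ _)
    ((derivative q).continuous.intervalIntegrable _ _)]
  ring

open Polynomial in
/-- The `n`-th derivative of a polynomial vanishing to order `n` at `a` and `b` is orthogonal to
all polynomials of degree less than `n`. -/
lemma integral_iterate_derivative_mul_eq_zero (a b : ℝ) (n : ℕ) (f q : ℝ[X])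
    (ha : (X - C a) ^ n ∣ f) (hb : (X - C b) ^ n ∣ f) (hq : derivative^[n] q = 0) :
    ∫ t in a..b, (derivative^[n] f).eval t * q.eval t = 0 := by
  induction n generalizing q with
  | zero =>
    obtain rfl : q = 0 := hq
    simp
  | succ n ih =>
    have root : ∀ c : ℝ, (X - C c) ^ (n + 1) ∣ f → (derivative^[n] f).eval c = 0 := by
      intro c hc
      have h := pow_sub_dvd_iterate_derivative_of_pow_dvd n hc
      rw [Nat.add_sub_cancel_left, pow_one] at h
      exact dvd_iff_isRoot.mp h
    rw [Function.iterate_succ_apply', integral_derivative_mul_eval, root a ha, root b hb,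
      ih _ ((pow_dvd_pow _ n.le_succ).trans ha) ((pow_dvd_pow _ n.le_succ).trans hb)
        (by rwa [Function.iterate_succ_apply] at hq)]
    simp

open Polynomial in
lemma eval_iterate_derivative_X_sub_C_pow_mul (b : ℝ) (n k : ℕ) (g : ℝ[X]) :
    (derivative^[k + n] ((X - C b) ^ n * g)).eval b =
      (k + n).factorial * (taylor b g).coeff k := by
  rw [← factorial_smul_hasseDeriv, LinearMap.smul_apply, eval_smul, nsmul_eq_mul]
  rw [← taylor_coeff, taylor_mul, taylor_pow]
  simp [coeff_X_pow_mul]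

open Polynomial in
/-- The polynomial of degree at most `n` representing evaluation at the endpoint `b` in
`L²(a,b)`, and its value at `b`. The endpoints may come in either order. -/
lemma exists_endpoint_kernel {a b : ℝ} (hab : a ≠ b) (n : ℕ) :
    ∃ K : ℝ[X], K.natDegree ≤ n ∧ K.eval b = ((n : ℝ) + 1) ^ 2 / (b - a) ∧
      ∀ q : ℝ[X], q.natDegree ≤ n → ∫ t in a..b, K.eval t * q.eval t = q.eval b := by
  have hne : b - a ≠ 0 := sub_ne_zero.mpr hab.symm
  have hfac : (n.factorial : ℝ) ≠ 0 := by positivity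
  set f : ℝ[X] := (X - C b) ^ n * (X - C a) ^ (n + 1) with hf
  set c : ℝ := ((n.factorial : ℝ) * (b - a) ^ (n + 1))⁻¹ with hc
  have hfb : (derivative^[n] f).eval b = n.factorial * (b - a) ^ (n + 1) := by
    have h := eval_iterate_derivative_X_sub_C_pow_mul b n 0 ((X - C a) ^ (n + 1))
    rw [zero_add] at h
    rw [hf, h, taylor_coeff_zero]
    simp
  have hfa : (derivative^[n] f).eval a = 0 := by
    have h := pow_sub_dvd_iterate_derivative_of_pow_dvd n
      (show (X - C a) ^ (n + 1) ∣ f from dvd_mul_left _ _)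
    rw [Nat.add_sub_cancel_left, pow_one] at h
    exact dvd_iff_isRoot.mp h
  refine ⟨C c * derivative^[n + 1] f, ?_, ?_, fun q hq => ?_⟩
  · refine (natDegree_C_mul_le _ _).trans ((natDegree_iterate_derivative _ _).trans ?_)
    have : f.natDegree ≤ n + (n + 1) := by
      refine natDegree_mul_le.trans ?_
      simp
    omega
  · have h := eval_iterate_derivative_X_sub_C_pow_mul b n 1 ((X - C a) ^ (n + 1))
    rw [add_comm 1 n] at h
    rw [eval_mul, eval_C, hf, h, taylor_coeff_one, hc, derivative_X_sub_C_pow]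
    simp only [eval_mul, eval_pow, eval_sub, eval_X, eval_C, Nat.factorial_succ,
      Nat.add_sub_cancel]
    push_cast
    field_simp
    ring
  · have hq0 : derivative^[n] (derivative q) = 0 := by
      rw [← Function.iterate_succ_apply]
      exact iterate_derivative_eq_zero (by omega)
    have horth := integral_iterate_derivative_mul_eq_zero a b n f (derivative q)
      ((pow_dvd_pow _ n.le_succ).trans (dvd_mul_left _ _)) (dvd_mul_right _ _) hq0
    simp only [eval_mul, eval_C, mul_assoc, intervalIntegral.integral_const_mul]
    rw [Function.iterate_succ_apply', integral_derivative_mul_eval, horth, hfa, hfb, hc]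
    field_simp
    ring

open Polynomial in
/-- `∫ q² - q(b)² (b - a) / (n + 1)²` is the integral of a square. -/
lemma exists_integral_sq_eq {a b : ℝ} (hab : a ≠ b) (n : ℕ) (q : ℝ[X]) (hq : q.natDegree ≤ n) :
    ∃ r : ℝ[X], ∫ t in a..b, r.eval t ^ 2 =
      (∫ t in a..b, q.eval t ^ 2) - q.eval b ^ 2 * (b - a) / ((n : ℝ) + 1) ^ 2 := by
  obtain ⟨K, hK, hKb, hrep⟩ := exists_endpoint_kernel hab n
  have hne : b - a ≠ 0 := sub_ne_zero.mpr hab.symm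
  have hn : (n : ℝ) + 1 ≠ 0 := by positivity
  set c : ℝ := q.eval b * (b - a) / ((n : ℝ) + 1) ^ 2 with hc
  refine ⟨q - C c * K, ?_⟩
  have hpoint : ∀ t : ℝ, (q - C c * K).eval t ^ 2 =
      q.eval t ^ 2 + K.eval t * (C (c ^ 2) * K - C (2 * c) * q).eval t := by
    intro t
    simp only [eval_sub, eval_mul, eval_C]
    ring
  have hdeg : (C (c ^ 2) * K - C (2 * c) * q).natDegree ≤ n :=
    (natDegree_sub_le _ _).trans
      (max_le ((natDegree_C_mul_le _ _).trans hK) ((natDegree_C_mul_le _ _).trans hq))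
  simp only [hpoint]
  rw [intervalIntegral.integral_add
    (Continuous.intervalIntegrable (by fun_prop) _ _)
    (Continuous.intervalIntegrable (by fun_prop) _ _), hrep _ hdeg]
  simp only [eval_sub, eval_mul, eval_C, hKb, hc]
  field_simp
  ring

open Polynomial in
/-- Polynomial inverse trace inequality at the right endpoint. -/
lemma eval_right_sq_mul_le {a b : ℝ} (hab : a < b) (n : ℕ) (q : ℝ[X]) (hq : q.natDegree ≤ n) :
    q.eval b ^ 2 * (b - a) / ((n : ℝ) + 1) ^ 2 ≤ ∫ t in a..b, q.eval t ^ 2 := by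
  obtain ⟨r, hr⟩ := exists_integral_sq_eq hab.ne n q hq
  have := intervalIntegral.integral_nonneg (f := fun t => r.eval t ^ 2) (μ := volume) hab.le
    (fun t _ => sq_nonneg _)
  linarith

open Polynomial in
/-- Polynomial inverse trace inequality at the left endpoint. -/
lemma eval_left_sq_mul_le {a b : ℝ} (hab : a < b) (n : ℕ) (q : ℝ[X]) (hq : q.natDegree ≤ n) :
    q.eval a ^ 2 * (b - a) / ((n : ℝ) + 1) ^ 2 ≤ ∫ t in a..b, q.eval t ^ 2 := by
  obtain ⟨r, hr⟩ := exists_integral_sq_eq hab.ne' n q hq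
  rw [intervalIntegral.integral_symm a b, intervalIntegral.integral_symm a b,
    ← neg_sub b a, mul_neg, neg_div] at hr
  have := intervalIntegral.integral_nonneg (f := fun t => r.eval t ^ 2) (μ := volume) hab.le
    (fun t _ => sq_nonneg _)
  linarith

/-- The `L²` distance between the weak and the classical derivative on a cell is controlled by
the endpoint mismatches. -/
lemma integral_weakDeriv_sub_deriv_sq_le {a b : ℝ} (hab : a < b) {p : ℕ} (hp : 1 ≤ p)
    {v0 D : ℝ → ℝ} {vl vr : ℝ} (hv : IsPolyDeg v0 p)
    (hD : IsWeakDerivOn a b (p - 1) v0 vl vr D) :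
    ∫ t in a..b, (D t - deriv v0 t) ^ 2 ≤
      2 * ((p : ℝ) ^ 2 / (b - a)) * ((v0 b - vr) ^ 2 + (v0 a - vl) ^ 2) := by
  obtain ⟨u, hu, huv⟩ := hv
  obtain ⟨⟨d, hd, hdD⟩, hweak⟩ := hD
  obtain rfl : v0 = fun t => u.eval t := funext huv
  obtain rfl : D = fun t => d.eval t := funext hdD
  have hw : (d - u.derivative).natDegree ≤ p - 1 :=
    (Polynomial.natDegree_sub_le _ _).trans
      (max_le hd ((Polynomial.natDegree_derivative_le u).trans (by omega)))
  set w := d - u.derivative with hwdef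
  have hcast : ((p - 1 : ℕ) : ℝ) + 1 = p := by
    rw [Nat.cast_sub hp]; simp
  have hr := eval_right_sq_mul_le hab (p - 1) w hw
  have hl := eval_left_sq_mul_le hab (p - 1) w hw
  rw [hcast] at hr hl
  have hpt : ∀ t, (d.eval t - deriv (fun s => u.eval s) t) ^ 2 = w.eval t ^ 2 := by
    intro t
    rw [Polynomial.deriv, hwdef, Polynomial.eval_sub]
  simp only [hpt]
  set W := ∫ t in a..b, w.eval t ^ 2 with hW
  have hid : W = (vr - u.eval b) * w.eval b - (vl - u.eval a) * w.eval a := by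
    have h1 := hweak w hw
    have h2 := integral_derivative_mul_eval a b u w
    have h3 : W = (∫ t in a..b, d.eval t * w.eval t)
        - ∫ t in a..b, u.derivative.eval t * w.eval t := by
      rw [← intervalIntegral.integral_sub
        (Continuous.intervalIntegrable (by fun_prop) _ _)
        (Continuous.intervalIntegrable (by fun_prop) _ _), hW]
      congr 1 with t
      simp only [hwdef, Polynomial.eval_sub]
      ring
    linarith
  have hh : 0 < b - a := sub_pos.mpr hab
  have hp0 : (0 : ℝ) < p := by exact_mod_cast hp
  set k : ℝ := (p : ℝ) ^ 2 / (b - a) with hk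
  have hk0 : 0 < k := by positivity
  have hyoung : ∀ x y : ℝ, x * y ≤ k * x ^ 2 + y ^ 2 * (b - a) / (p : ℝ) ^ 2 / 4 := by
    intro x y
    have h : k * x ^ 2 + y ^ 2 * (b - a) / (p : ℝ) ^ 2 / 4 - x * y
        = k * (x - y / (2 * k)) ^ 2 := by
      rw [hk]; field_simp; ring
    nlinarith [mul_nonneg hk0.le (sq_nonneg (x - y / (2 * k)))]
  have y1 := hyoung (vr - u.eval b) (w.eval b)
  have y2 := hyoung (u.eval a - vl) (w.eval a)
  nlinarith

lemma integral_sq_le_of_sub {a b : ℝ} (hab : a ≤ b) {f g : ℝ → ℝ} (hf : Continuous f)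
    (hg : Continuous g) :
    ∫ t in a..b, f t ^ 2 ≤
      2 * (∫ t in a..b, g t ^ 2) + 2 * ∫ t in a..b, (f t - g t) ^ 2 := by
  rw [← intervalIntegral.integral_const_mul, ← intervalIntegral.integral_const_mul,
    ← intervalIntegral.integral_add
      (Continuous.intervalIntegrable (by fun_prop) _ _)
      (Continuous.intervalIntegrable (by fun_prop) _ _)]
  refine intervalIntegral.integral_mono_on hab
    (Continuous.intervalIntegrable (by fun_prop) _ _)
    (Continuous.intervalIntegrable (by fun_prop) _ _) fun t _ => ?_
  nlinarith [sq_nonneg (f t - 2 * g t)]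

lemma Mesh.xl_lt_xr {N : ℕ} (m : Mesh N) (j : Fin N) : m.xl j < m.xr j :=
  m.mono Fin.castSucc_lt_succ

lemma Mesh.xr_mem_Icc {N : ℕ} (m : Mesh N) (j : Fin N) : m.xr j ∈ Set.Icc (0 : ℝ) 1 := by
  constructor
  · rw [← m.left]
    exact m.mono.monotone (Fin.zero_le _)
  · rw [← m.right]
    exact m.mono.monotone (Fin.le_last _)

/-- If on every cell `F` and `G` differ in `L²` by at most the scaled endpoint mismatches, then
the energies built on them dominate each other. -/
lemma energy_le {N : ℕ} (m : Mesh N) {ε₁ Cσ k R : ℝ} (hε₁ : 0 < ε₁) (hCσ : 0 < Cσ)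
    {σ : Fin N → ℝ} (hσ : ∀ j, 0 < σ j) (hbound : ∀ j, ε₁ * k / m.width j / σ j ≤ Cσ)
    {v0 : Fin N → ℝ → ℝ} {vb : Fin (N + 1) → ℝ} (hR : 0 ≤ R) {F G : Fin N → ℝ → ℝ}
    (hF : ∀ j, Continuous (F j)) (hG : ∀ j, Continuous (G j))
    (hFG : ∀ j, ∫ t in (m.xl j)..(m.xr j), (F j t - G j t) ^ 2 ≤
      2 * (k / m.width j) * ((v0 j (m.xr j) - vb j.succ) ^ 2
        + (v0 j (m.xl j) - vb j.castSucc) ^ 2)) :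
    ε₁ * (∑ j, ∫ t in (m.xl j)..(m.xr j), F j t ^ 2) + Sform m σ v0 vb v0 vb + R ≤
      (2 + 4 * Cσ) * (ε₁ * (∑ j, ∫ t in (m.xl j)..(m.xr j), G j t ^ 2)
        + Sform m σ v0 vb v0 vb + R) := by
  have hcell : ∀ j, ε₁ * ∫ t in (m.xl j)..(m.xr j), F j t ^ 2 ≤
      2 * (ε₁ * ∫ t in (m.xl j)..(m.xr j), G j t ^ 2) + 4 * Cσ * (σ j *
        ((v0 j (m.xr j) - vb j.succ) * (v0 j (m.xr j) - vb j.succ)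
          + (v0 j (m.xl j) - vb j.castSucc) * (v0 j (m.xl j) - vb j.castSucc))) := by
    intro j
    have h1 := integral_sq_le_of_sub (m.xl_lt_xr j).le (hF j) (hG j)
    have h2 := (div_le_iff₀ (hσ j)).mp (hbound j)
    rw [mul_div_assoc] at h2
    set M : ℝ := (v0 j (m.xr j) - vb j.succ) ^ 2 + (v0 j (m.xl j) - vb j.castSucc) ^ 2 with hM
    have hM0 : 0 ≤ M := by positivity
    have h3 := mul_le_mul_of_nonneg_left (h1.trans
      (add_le_add_right (mul_le_mul_of_nonneg_left (hFG j) zero_le_two) _)) hε₁.le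
    have h4 := mul_le_mul_of_nonneg_right h2 hM0
    simp only [← pow_two, ← hM]
    linarith
  have hsum := Finset.sum_le_sum fun j (_ : j ∈ Finset.univ) => hcell j
  simp only [Finset.sum_add_distrib, ← Finset.mul_sum] at hsum
  have hG0 : 0 ≤ ε₁ * ∑ j, ∫ t in (m.xl j)..(m.xr j), G j t ^ 2 :=
    mul_nonneg hε₁.le (Finset.sum_nonneg fun j _ =>
      intervalIntegral.integral_nonneg (m.xl_lt_xr j).le fun t _ => sq_nonneg _)
  have hS0 : 0 ≤ Sform m σ v0 vb v0 vb := Finset.sum_nonneg fun j _ =>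
    mul_nonneg (hσ j).le (add_nonneg (mul_self_nonneg _) (mul_self_nonneg _))
  change _ ≤ _ + 4 * Cσ * Sform m σ v0 vb v0 vb at hsum
  nlinarith [mul_nonneg hCσ.le hG0, mul_nonneg hCσ.le hR]

/-- Equivalence of the WG norms `|||·|||_p` and `|||·|||` on `V_p^ω`,
uniformly in the mesh, the polynomial degree and the perturbation parameters, provided
`ε₁ p² h_j⁻¹ / σ_j ≤ C_σ`. -/
theorem statement0 (bb : ℝ → ℝ) (hb : Continuous bb)
    (hbpos : ∀ x ∈ Set.Icc (0 : ℝ) 1, 0 < bb x)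
    (Cσ : ℝ) (hCσ : 0 < Cσ) :
    ∃ Clb Cub : ℝ, 0 < Clb ∧ 0 < Cub ∧
      ∀ ε₁ ε₂ : ℝ, ε₁ ∈ Set.Ioc (0 : ℝ) 1 → ε₂ ∈ Set.Ioc (0 : ℝ) 1 →
      ∀ (N : ℕ) (m : Mesh N) (p : ℕ), 1 ≤ p →
      ∀ σ : Fin N → ℝ, (∀ j, 0 < σ j) →
        (∀ j, ε₁ * (p : ℝ) ^ 2 / m.width j / σ j ≤ Cσ) →
      ∀ (v0 : Fin N → ℝ → ℝ) (vb : Fin (N + 1) → ℝ), (∀ j, IsPolyDeg (v0 j) p) →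
      ∀ Dv : Fin N → ℝ → ℝ, IsWeakDeriv m (p - 1) v0 vb Dv →
        Clb * Real.sqrt (normT2 m ε₁ ε₂ bb σ v0 vb)
            ≤ Real.sqrt (normP2 m ε₁ ε₂ bb σ v0 vb Dv) ∧
          Real.sqrt (normP2 m ε₁ ε₂ bb σ v0 vb Dv)
            ≤ Cub * Real.sqrt (normT2 m ε₁ ε₂ bb σ v0 vb) := by
  have hK : 0 < 2 + 4 * Cσ := by positivity
  refine ⟨(Real.sqrt (2 + 4 * Cσ))⁻¹, Real.sqrt (2 + 4 * Cσ), by positivity, by positivity, ?_⟩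
  intro ε₁ ε₂ hε₁ hε₂ N m p hp σ hσ hbound v0 vb hv Dv hD
  set R : ℝ := (∑ j : Fin N, ∫ t in (m.xl j)..(m.xr j), (v0 j t) ^ 2)
    + Scform m ε₂ bb v0 vb v0 vb + Jsemi2 m ε₂ bb v0 vb with hRdef
  have hbx : ∀ j, 0 ≤ ε₂ * bb (m.xr j) := fun j =>
    mul_nonneg hε₂.1.le (hbpos _ (m.xr_mem_Icc j)).le
  have hR : 0 ≤ R := by
    refine add_nonneg (add_nonneg ?_ ?_) ?_
    · exact Finset.sum_nonneg fun j _ =>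
        intervalIntegral.integral_nonneg (m.xl_lt_xr j).le fun t _ => sq_nonneg _
    · refine Finset.sum_nonneg fun j _ => ?_
      rw [mul_assoc]
      exact mul_nonneg (hbx j) (mul_self_nonneg _)
    · refine Finset.sum_nonneg fun j _ => ?_
      rw [mul_assoc _ ε₂]
      refine mul_nonneg (mul_nonneg ?_ (hbx j)) (sq_nonneg _)
      split_ifs <;> norm_num
  have hDc : ∀ j, Continuous (Dv j) := by
    intro j
    obtain ⟨d, -, hd⟩ := (hD j).1
    rw [funext hd]
    exact d.continuous
  have hvc : ∀ j, Continuous (deriv (v0 j)) := by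
    intro j
    obtain ⟨u, -, hu⟩ := hv j
    have : deriv (v0 j) = fun t => u.derivative.eval t := by
      rw [funext hu]
      exact funext fun t => u.deriv
    rw [this]
    exact u.derivative.continuous
  have hdiff := fun j => integral_weakDeriv_sub_deriv_sq_le (m.xl_lt_xr j) hp (hv j) (hD j)
  have hub := energy_le m hε₁.1 hCσ hσ hbound hR hDc hvc hdiff
  have hlb := energy_le m hε₁.1 hCσ hσ hbound hR hvc hDc fun j => by
    simp only [sub_sq_comm (deriv (v0 j) _)]
    exact hdiff j
  have hP : normP2 m ε₁ ε₂ bb σ v0 vb Dv = ε₁ * (∑ j, ∫ t in (m.xl j)..(m.xr j), Dv j t ^ 2)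
      + Sform m σ v0 vb v0 vb + R := by
    rw [normP2, hRdef]; ring
  have hT : normT2 m ε₁ ε₂ bb σ v0 vb =
      ε₁ * (∑ j, ∫ t in (m.xl j)..(m.xr j), deriv (v0 j) t ^ 2)
      + Sform m σ v0 vb v0 vb + R := by
    rw [normT2, hRdef]; ring
  rw [← hP, ← hT] at hub hlb
  constructor
  · rw [inv_mul_le_iff₀ (by positivity), ← Real.sqrt_mul hK.le]
    exact Real.sqrt_le_sqrt hlb
  · rw [← Real.sqrt_mul hK.le]
    exact Real.sqrt_le_sqrt hub
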